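/- Let ζ ∈ (-1/2, ∞) and α ∈ (0,2]. Then there exist constants c > 0 and K > 0 (depending only on ζ and α) such that for all r, s, z, t > 0 with |z - s| > |r - s|/2: p_ζ^{(α)}(t,z,s) ≤ K · p_ζ^{(α)}(t, c r, c s). -/

import Mathlib

open MeasureTheory Real Set Filter

/-- Modified Bessel function of the first kind of order `ν`. -/
noncomputable def besselI (ν x : ℝ) : ℝ :=
  ∑' k : ℕ, (x / 2) ^ (2 * (k : ℝ) + ν) / ((Nat.factorial k : ℝ) * Real.Gamma ((k : ℝ) + ν + 1))

/-- The Bessel heat kernel `p_ζ^{(2)}(t,r,s)`. -/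
noncomputable def besselHeat (ζ t r s : ℝ) : ℝ :=
  (r * s) ^ ((1 : ℝ) / 2 - ζ) / (2 * t) * Real.exp (-(r ^ 2 + s ^ 2) / (4 * t)) *
    besselI (ζ - 1 / 2) (r * s / (2 * t))

/-- `σ` is a family of `α/2`-stable subordinator densities. -/
def IsStableSubordinatorDensity (α : ℝ) (σ : ℝ → ℝ → ℝ) : Prop :=
  (∀ t, 0 < t → ∀ τ, 0 < τ → 0 ≤ σ t τ) ∧
  (∀ t, 0 < t → Measurable (σ t)) ∧
  (∀ t l : ℝ, 0 < t → 0 ≤ l →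
    (∫ τ in Ioi (0 : ℝ), Real.exp (-τ * l) * σ t τ) = Real.exp (-t * l ^ (α / 2)))

/-- The `α/2`-subordinated Bessel heat kernel `p_ζ^{(α)}(t,r,s)`. -/
noncomputable def subKernel (ζ : ℝ) (σ : ℝ → ℝ → ℝ) (t r s : ℝ) : ℝ :=
  ∫ τ in Ioi (0 : ℝ), besselHeat ζ τ r s * σ t τ

/-- `p` is the kernel `p_ζ^{(α)}` for `α ∈ (0,2]`: the Bessel heat kernel itself when `α = 2`,
and the `α/2`-subordinated kernel when `α < 2`. -/
def IsSubordinatedBesselKernel (ζ α : ℝ) (p : ℝ → ℝ → ℝ → ℝ) : Prop :=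
  (α = 2 ∧ ∀ t r s : ℝ, p t r s = besselHeat ζ t r s) ∨
  (α < 2 ∧ ∃ σ : ℝ → ℝ → ℝ, IsStableSubordinatorDensity α σ ∧
    ∀ t r s : ℝ, p t r s = subKernel ζ σ t r s)

open scoped Nat

/-!
Write `I_ν(x) = (x / 2) ^ ν * J(x)` with `ν = ζ - 1 / 2`, and `a = 2 * (ν + 1) > 0`. Then
`p_ζ^{(2)}(τ, r, s)` is a multiple, depending on `ζ` and `τ` only, of
`exp (-(r ^ 2 + s ^ 2) / (4 * τ)) * J(r * s / (2 * τ))`. The function `J` is increasing, while its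
power series coefficients divided by those of `a * cosh x + x * sinh x` decrease; hence the quotient
`J(x) / (a * cosh x + x * sinh x)` decreases as well, which bounds `J(y) / J(x)` for `x ≤ y` by a
multiple of `exp (y - x) * (a + y) / (a + x)` and replaces the Bessel asymptotics.

For `c = 1 / 4`, the condition `|z - s| > |r - s| / 2` makes `r * s` and `z * s` comparable up to
`(z - s) ^ 2`. The Gaussian factor of `p_ζ^{(2)}(τ, z, s)` absorbs this error, because
`|c * r - c * s|` is at most `|z - s| / 2`. This gives the estimate for `α = 2`, and its integral
against the subordinator density gives `α < 2`. Integrability is read off the Laplace transform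
`exp (-t * l ^ (α / 2))`, which shows that the density has all negative moments.
-/

-- As for Chebyshev's sum inequality, the difference of the two sides is symmetrized over `(i, j)`.
lemma tsum_mul_tsum_le_tsum_mul_tsum {ι : Type*} [LinearOrder ι] {a b p q : ι → ℝ}
    (hab : ∀ i j, i ≤ j → a j * b i ≤ a i * b j) (hpq : ∀ i j, i ≤ j → p j * q i ≤ p i * q j)
    (hap : Summable fun i => a i * p i) (haq : Summable fun i => a i * q i)
    (hbp : Summable fun i => b i * p i) (hbq : Summable fun i => b i * q i) :
    (∑' i, a i * q i) * ∑' i, b i * p i ≤ (∑' i, a i * p i) * ∑' i, b i * q i := by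
  let F : ι × ι → ℝ := fun x => a x.1 * p x.1 * (b x.2 * q x.2) - a x.1 * q x.1 * (b x.2 * p x.2)
  have hmul : ∀ {u v : ι → ℝ}, Summable u → Summable v →
      HasSum (fun x : ι × ι => u x.1 * v x.2) ((∑' i, u i) * ∑' i, v i) := fun hu hv =>
    hu.hasSum.mul hv.hasSum (summable_mul_of_summable_norm hu.norm hv.norm)
  have hF : HasSum F ((∑' i, a i * p i) * (∑' i, b i * q i) -
      (∑' i, a i * q i) * ∑' i, b i * p i) := (hmul hap hbq).sub (hmul haq hbp)
  have hsymm := hF.add ((Equiv.prodComm ι ι).hasSum_iff.2 hF)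
  have hpair : ∀ i j, 0 ≤ (a i * b j - a j * b i) * (p i * q j - p j * q i) := fun i j => by
    rcases le_total i j with hij | hji
    · exact mul_nonneg (sub_nonneg.2 (hab i j hij)) (sub_nonneg.2 (hpq i j hij))
    · exact mul_nonneg_of_nonpos_of_nonpos (by linarith [hab j i hji]) (by linarith [hpq j i hji])
  have hnonneg := hsymm.nonneg fun x => by
    have hsplit : F x + F x.swap =
        (a x.1 * b x.2 - a x.2 * b x.1) * (p x.1 * q x.2 - p x.2 * q x.1) := by
      simp only [F, Prod.fst_swap, Prod.snd_swap]
      ring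
    exact hsplit.symm ▸ hpair x.1 x.2
  linarith

lemma pow_mul_pow_le_pow_mul_pow {x y : ℝ} (hx : 0 ≤ x) (hxy : x ≤ y) {i j : ℕ} (hij : i ≤ j) :
    x ^ j * y ^ i ≤ x ^ i * y ^ j := by
  obtain ⟨d, rfl⟩ := Nat.exists_eq_add_of_le hij
  calc x ^ (i + d) * y ^ i = x ^ i * y ^ i * x ^ d := by ring
    _ ≤ x ^ i * y ^ i * y ^ d := by
      have := hx.trans hxy
      gcongr
    _ = x ^ i * y ^ (i + d) := by ring

section Hyperbolic

lemma hasSum_mul_cosh_add_mul_sinh (a x : ℝ) :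
    HasSum (fun k : ℕ => (2 * k + a) / (2 * k)! * (x ^ 2) ^ k) (a * cosh x + x * sinh x) := by
  have hsinh : HasSum (fun k : ℕ => 2 * k / (2 * k)! * (x ^ 2) ^ k) (x * sinh x) := by
    rw [← hasSum_nat_add_iff' 1]
    simp only [Finset.range_one, Finset.sum_singleton, Nat.cast_zero, mul_zero, zero_div, zero_mul,
      sub_zero]
    refine ((hasSum_sinh x).mul_left x).congr_fun fun k => ?_
    rw [Nat.mul_succ, Nat.factorial_succ, ← pow_mul]
    push_cast
    field_simp
    ring
  refine (((hasSum_cosh x).mul_left a).add hsinh).congr_fun fun k => ?_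
  rw [← pow_mul]
  ring

lemma cosh_le_exp_sub_mul_cosh {x y : ℝ} (hxy : x ≤ y) : cosh y ≤ exp (y - x) * cosh x := by
  have hneg : exp (-y) ≤ exp (y - 2 * x) := exp_le_exp.2 (by linarith)
  calc cosh y = (exp y + exp (-y)) / 2 := cosh_eq y
    _ ≤ (exp (y - x + x) + exp (y - x + -x)) / 2 := by ring_nf at hneg ⊢; linarith
    _ = exp (y - x) * cosh x := by rw [exp_add, exp_add, cosh_eq]; ring

lemma sub_one_mul_cosh_le_mul_sinh (x : ℝ) : (x - 1) * cosh x ≤ x * sinh x := by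
  have hexp : x * exp (-x) ≤ 1 := by
    rw [exp_neg, mul_inv_le_iff₀ (exp_pos x)]
    linarith [add_one_le_exp x]
  rw [← cosh_sub_sinh] at hexp
  linarith [one_le_cosh x]

lemma mul_cosh_add_mul_sinh_le {a x y : ℝ} (ha : 0 < a) (hx : 0 ≤ x) (hxy : x ≤ y) :
    a * cosh y + y * sinh y ≤
      (1 + 1 / a) * ((a + y) / (a + x)) * exp (y - x) * (a * cosh x + x * sinh x) := by
  have hy : 0 ≤ y := hx.trans hxy
  have hlower : (a + x) * cosh x ≤ (1 + 1 / a) * (a * cosh x + x * sinh x) := by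
    have : 0 ≤ 1 / a * (x * sinh x) := by have := sinh_nonneg_iff.2 hx; positivity
    calc (a + x) * cosh x = a * cosh x + (x - 1) * cosh x + cosh x := by ring
      _ ≤ a * cosh x + x * sinh x + cosh x + 1 / a * (x * sinh x) := by
        linarith [sub_one_mul_cosh_le_mul_sinh x]
      _ = (1 + 1 / a) * (a * cosh x + x * sinh x) := by field_simp; ring
  calc a * cosh y + y * sinh y ≤ (a + y) * cosh y := by
        rw [add_mul]
        gcongr
        exact (sinh_lt_cosh y).le
    _ ≤ (a + y) * (exp (y - x) * cosh x) := by gcongr; exact cosh_le_exp_sub_mul_cosh hxy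
    _ = (a + y) / (a + x) * exp (y - x) * ((a + x) * cosh x) := by field_simp
    _ ≤ (a + y) / (a + x) * exp (y - x) * ((1 + 1 / a) * (a * cosh x + x * sinh x)) := by gcongr
    _ = _ := by ring

end Hyperbolic

/-- The coefficient of `x ^ (2 * k)` in the even entire function `(x / 2) ^ (-ν) * besselI ν x`. -/
noncomputable def besselCoeff (ν : ℝ) (k : ℕ) : ℝ :=
  1 / (4 ^ k * (k ! * Gamma (k + ν + 1)))

/-- The normalized Bessel function `(x / 2) ^ (-ν) * besselI ν x`, written as its power series in
`x ^ 2` so that it also has the right value at `x = 0`. -/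
noncomputable def normalizedBesselI (ν x : ℝ) : ℝ :=
  ∑' k, besselCoeff ν k * (x ^ 2) ^ k

section NormalizedBessel

variable {ν x y : ℝ}

lemma besselI_eq_rpow_mul_normalizedBesselI (ν : ℝ) (hx : 0 < x) :
    besselI ν x = (x / 2) ^ ν * normalizedBesselI ν x := by
  rw [besselI, normalizedBesselI, ← tsum_mul_left]
  refine tsum_congr fun k => ?_
  have hpow : (x / 2) ^ (2 * (k : ℝ)) = (x ^ 2) ^ k / 4 ^ k := by
    rw [rpow_mul (by positivity), rpow_natCast, rpow_two, ← div_pow]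
    ring_nf
  rw [rpow_add (by positivity), hpow, besselCoeff]
  ring

lemma besselCoeff_pos (hν : -1 < ν) (k : ℕ) : 0 < besselCoeff ν k := by
  have : 0 < Gamma (k + ν + 1) := Gamma_pos_of_pos (by linarith [k.cast_nonneg (α := ℝ)])
  unfold besselCoeff
  positivity

lemma besselCoeff_eq_mul_succ (hν : -1 < ν) (k : ℕ) :
    besselCoeff ν k = 4 * (k + 1) * (k + ν + 1) * besselCoeff ν (k + 1) := by
  have hk : 0 < k + ν + 1 := by linarith [k.cast_nonneg (α := ℝ)]
  have hΓ : Gamma ((k + 1 : ℕ) + ν + 1) = (k + ν + 1) * Gamma (k + ν + 1) := by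
    rw [← Gamma_add_one hk.ne']
    push_cast
    ring_nf
  have := Gamma_pos_of_pos hk
  rw [besselCoeff, besselCoeff, hΓ, Nat.factorial_succ]
  push_cast
  field_simp
  ring

-- The quotient is `2 * √π * Γ(k + ν + 2) / Γ(k + 1 / 2)`.
lemma monotone_div_besselCoeff (hν : -1 < ν) :
    Monotone fun k : ℕ => (2 * k + 2 * (ν + 1)) / (2 * k)! / besselCoeff ν k := by
  refine monotone_nat_of_le_succ fun k => ?_
  have hpos := besselCoeff_pos hν (k + 1)
  have hk : 0 < k + ν + 1 := by linarith [k.cast_nonneg (α := ℝ)]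
  calc (2 * k + 2 * (ν + 1)) / (2 * k)! / besselCoeff ν k
      = 1 / (2 * (k + 1) * (2 * k)! * besselCoeff ν (k + 1)) := by
        rw [besselCoeff_eq_mul_succ hν k]
        field_simp
        ring
    _ ≤ 1 / (2 * (k + 1) * (2 * k)! * besselCoeff ν (k + 1)) *
          ((2 * (k + 1) + 2 * (ν + 1)) / (2 * k + 1)) :=
        le_mul_of_one_le_right (by positivity) ((one_le_div (by positivity)).2 (by linarith))
    _ = (2 * (k + 1 : ℕ) + 2 * (ν + 1)) / (2 * (k + 1))! / besselCoeff ν (k + 1) := by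
        rw [Nat.mul_succ, Nat.factorial_succ, Nat.factorial_succ]
        push_cast
        field_simp
        ring

lemma summable_besselCoeff_mul (hν : -1 < ν) (x : ℝ) :
    Summable fun k : ℕ => besselCoeff ν k * (x ^ 2) ^ k := by
  have hbound := (hasSum_mul_cosh_add_mul_sinh (2 * (ν + 1)) x).summable.mul_left
    (besselCoeff ν 0 / (2 * (ν + 1)))
  refine hbound.of_nonneg_of_le
    (fun k => mul_nonneg (besselCoeff_pos hν k).le (by positivity)) fun k => ?_
  have hratio := monotone_div_besselCoeff hν k.zero_le
  have ha : 0 < ν + 1 := by linarith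
  have h0 := besselCoeff_pos hν 0
  simp only [Nat.cast_zero, mul_zero, zero_add, Nat.factorial_zero, Nat.cast_one, div_one] at hratio
  rw [div_le_div_iff₀ h0 (besselCoeff_pos hν k)] at hratio
  rw [← mul_assoc]
  gcongr
  rw [div_mul_eq_mul_div, le_div_iff₀ (by positivity)]
  linarith

lemma normalizedBesselI_nonneg (hν : -1 < ν) (x : ℝ) : 0 ≤ normalizedBesselI ν x :=
  tsum_nonneg fun k => mul_nonneg (besselCoeff_pos hν k).le (by positivity)

lemma monotoneOn_normalizedBesselI (hν : -1 < ν) :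
    MonotoneOn (normalizedBesselI ν) (Ici 0) := fun x (hx : 0 ≤ x) y _ hxy =>
  (summable_besselCoeff_mul hν x).tsum_le_tsum
    (fun k => mul_le_mul_of_nonneg_left (by gcongr) (besselCoeff_pos hν k).le)
    (summable_besselCoeff_mul hν y)

lemma normalizedBesselI_mul_le_mul (hν : -1 < ν) (hx : 0 ≤ x) (hxy : x ≤ y) :
    normalizedBesselI ν y * (2 * (ν + 1) * cosh x + x * sinh x) ≤
      normalizedBesselI ν x * (2 * (ν + 1) * cosh y + y * sinh y) := by
  have hsum := hasSum_mul_cosh_add_mul_sinh (2 * (ν + 1))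
  rw [← (hsum x).tsum_eq, ← (hsum y).tsum_eq]
  refine tsum_mul_tsum_le_tsum_mul_tsum (fun i j hij => ?_)
    (fun i j hij => pow_mul_pow_le_pow_mul_pow (sq_nonneg x) (by gcongr) hij)
    (summable_besselCoeff_mul hν x) (summable_besselCoeff_mul hν y) (hsum x).summable
    (hsum y).summable
  have hratio := monotone_div_besselCoeff hν hij
  rw [div_le_div_iff₀ (besselCoeff_pos hν i) (besselCoeff_pos hν j)] at hratio
  linarith

lemma normalizedBesselI_le_mul_exp (hν : -1 < ν) (hx : 0 ≤ x) (hxy : x ≤ y) :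
    normalizedBesselI ν y ≤ (1 + 1 / (2 * (ν + 1))) * ((2 * (ν + 1) + y) / (2 * (ν + 1) + x)) *
      exp (y - x) * normalizedBesselI ν x := by
  have ha : 0 < 2 * (ν + 1) := by linarith
  have hH : 0 < 2 * (ν + 1) * cosh x + x * sinh x := add_pos_of_pos_of_nonneg
    (mul_pos ha (cosh_pos x)) (mul_nonneg hx (sinh_nonneg_iff.2 hx))
  refine le_of_mul_le_mul_right ?_ hH
  calc _ ≤ normalizedBesselI ν x * (2 * (ν + 1) * cosh y + y * sinh y) :=
        normalizedBesselI_mul_le_mul hν hx hxy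
    _ ≤ normalizedBesselI ν x * _ := mul_le_mul_of_nonneg_left (mul_cosh_add_mul_sinh_le ha hx hxy)
        (normalizedBesselI_nonneg hν x)
    _ = _ := by ring

lemma add_div_add_le_mul_exp {a D : ℝ} (ha : 0 < a) (hx : 0 ≤ x) (hD : 0 ≤ D)
    (hyx : y ≤ 96 * x + 3 * D) : (a + y) / (a + x) ≤ (96 + 24 / a) * exp (D / 8) := by
  have hexp := add_one_le_exp (D / 8)
  calc (a + y) / (a + x) ≤ 96 + 3 * D / a := by
        rw [div_le_iff₀ (by positivity)]
        have : 0 ≤ 3 * D / a * x := by positivity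
        have : 3 * D / a * a = 3 * D := by field_simp
        linarith
    _ = 96 * 1 + 24 / a * (D / 8) := by ring
    _ ≤ 96 * exp (D / 8) + 24 / a * exp (D / 8) := by gcongr <;> linarith
    _ = (96 + 24 / a) * exp (D / 8) := by ring

-- Factoring `exp` out of `normalizedBesselI` leaves an almost decreasing function, so the case
-- `x ≤ y` costs only the ratio `(a + y) / (a + x) = O(1 + D)`; in the case `y ≤ x`, the
-- monotonicity of `normalizedBesselI` suffices because `x - y ≤ D / 8`.
lemma exists_exp_mul_normalizedBesselI_le (hν : -1 < ν) :
    ∃ K : ℝ, 0 < K ∧ ∀ x y D : ℝ, 0 ≤ x → 0 ≤ y → 0 ≤ D → x ≤ y / 4 + D / 8 → y ≤ 96 * x + 3 * D →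
      exp (-(y + D / 4)) * normalizedBesselI ν y ≤
        K * (exp (-(x + D / 16)) * normalizedBesselI ν x) := by
  set a := 2 * (ν + 1)
  have ha : 0 < a := by linarith
  set K := (1 + 1 / a) * (96 + 24 / a) with hK_def
  have hK : 1 ≤ K := one_le_mul_of_one_le_of_one_le
    (le_add_of_nonneg_right (by positivity)) (by linarith [div_pos (by norm_num : (0 : ℝ) < 24) ha])
  refine ⟨K, by positivity, fun x y D hx hy hD hxy hyx => ?_⟩
  have hJx := normalizedBesselI_nonneg hν x
  rcases le_total y x with hle | hle
  · calc exp (-(y + D / 4)) * normalizedBesselI ν y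
        ≤ exp (-(x + D / 16)) * normalizedBesselI ν x :=
          mul_le_mul (exp_le_exp.2 (by linarith)) (monotoneOn_normalizedBesselI hν hy hx hle)
            (normalizedBesselI_nonneg hν y) (exp_pos _).le
      _ ≤ K * (exp (-(x + D / 16)) * normalizedBesselI ν x) :=
          le_mul_of_one_le_left (by positivity) hK
  · have hratio := add_div_add_le_mul_exp ha hx hD hyx
    calc exp (-(y + D / 4)) * normalizedBesselI ν y
        ≤ exp (-(y + D / 4)) * ((1 + 1 / a) * ((a + y) / (a + x)) * exp (y - x) *
            normalizedBesselI ν x) := by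
          gcongr
          exact normalizedBesselI_le_mul_exp hν hx hle
      _ ≤ exp (-(y + D / 4)) * ((1 + 1 / a) * ((96 + 24 / a) * exp (D / 8)) * exp (y - x) *
            normalizedBesselI ν x) := by gcongr
      _ = K * (exp (-(y + D / 4) + D / 8 + (y - x)) * normalizedBesselI ν x) := by
          rw [exp_add, exp_add, hK_def]
          ring
      _ ≤ K * (exp (-(x + D / 16)) * normalizedBesselI ν x) := by
          gcongr
          linarith

end NormalizedBessel

section BesselHeat

variable {ζ τ r s z : ℝ}

lemma mul_le_four_mul_mul_add_sq (hs : 0 ≤ s) (h : |r - s| ≤ 2 * |z - s|) :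
    r * s ≤ 4 * (z * s + (z - s) ^ 2) := by
  set e := |z - s|
  have hr : r ≤ s + 2 * e := by linarith [le_abs_self (r - s)]
  have hz : s - e ≤ z := by linarith [neg_abs_le (z - s)]
  rw [← sq_abs (z - s)]
  calc r * s ≤ (s + 2 * e) * s := by gcongr
    _ ≤ 4 * ((s - e) * s + e ^ 2) := by linarith [sq_nonneg (s - e), sq_nonneg e]
    _ ≤ 4 * (z * s + e ^ 2) := by gcongr

lemma mul_le_six_mul_mul_add_sq (hr : 0 ≤ r) (hs : 0 ≤ s) (h : |r - s| ≤ 2 * |z - s|) :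
    z * s ≤ 6 * (r * s + (z - s) ^ 2) := by
  set e := |z - s|
  have hz : z ≤ s + e := by linarith [le_abs_self (z - s)]
  have hr' : s - 2 * e ≤ r := by linarith [neg_abs_le (r - s)]
  rw [← sq_abs (z - s)]
  refine (mul_le_mul_of_nonneg_right hz hs).trans ?_
  have : 0 ≤ e := abs_nonneg _
  rcases le_total s (2 * e) with hse | hes
  · have : (s - 2 * e) * (s + 3 * e) ≤ 0 :=
      mul_nonpos_of_nonpos_of_nonneg (by linarith) (by positivity)
    linarith [mul_nonneg hr hs]
  · have : 0 ≤ (s - 2 * e) * (5 * s - 3 * e) := mul_nonneg (by linarith) (by linarith)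
    linarith [mul_le_mul_of_nonneg_right hr' hs]

lemma besselHeat_eq (hτ : 0 < τ) (hr : 0 < r) (hs : 0 < s) :
    besselHeat ζ τ r s = 2 * (4 * τ) ^ (-(ζ + 1 / 2)) *
      (exp (-(r ^ 2 + s ^ 2) / (4 * τ)) * normalizedBesselI (ζ - 1 / 2) (r * s / (2 * τ))) := by
  have hpow : (r * s) ^ (1 / 2 - ζ) / (2 * τ) * (r * s / (2 * τ) / 2) ^ (ζ - 1 / 2) =
      2 * (4 * τ) ^ (-(ζ + 1 / 2)) := by
    rw [show r * s / (2 * τ) / 2 = r * s / (4 * τ) by field_simp; norm_num,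
      div_rpow (by positivity) (by positivity), show 1 / 2 - ζ = -(ζ - 1 / 2) by ring,
      rpow_neg (by positivity), show -(ζ + 1 / 2) = -(ζ - 1 / 2) - 1 by ring,
      rpow_sub_one (by positivity), rpow_neg (by positivity)]
    field_simp
    norm_num
  rw [besselHeat, besselI_eq_rpow_mul_normalizedBesselI _ (by positivity), ← hpow]
  ring

lemma exists_besselHeat_le (hζ : -1 / 2 < ζ) :
    ∃ K : ℝ, 0 < K ∧ ∀ τ r s z : ℝ, 0 < τ → 0 < r → 0 < s → 0 < z → |r - s| ≤ 2 * |z - s| →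
      besselHeat ζ τ z s ≤ K * besselHeat ζ τ (1 / 4 * r) (1 / 4 * s) := by
  obtain ⟨K, hK, hle⟩ := exists_exp_mul_normalizedBesselI_le (ν := ζ - 1 / 2) (by linarith)
  refine ⟨K, hK, fun τ r s z hτ hr hs hz h => ?_⟩
  set x := 1 / 4 * r * (1 / 4 * s) / (2 * τ) with hx
  set y := z * s / (2 * τ) with hy
  set D := (z - s) ^ 2 / τ with hD
  have hxy : x ≤ y / 4 + D / 8 := by
    rw [← sub_nonneg]
    calc 0 ≤ (4 * (z * s + (z - s) ^ 2) - r * s) / (32 * τ) :=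
          div_nonneg (sub_nonneg.2 (mul_le_four_mul_mul_add_sq hs.le h)) (by positivity)
      _ = y / 4 + D / 8 - x := by rw [hx, hy, hD]; field_simp; ring
  have hyx : y ≤ 96 * x + 3 * D := by
    rw [← sub_nonneg]
    calc 0 ≤ (6 * (r * s + (z - s) ^ 2) - z * s) / (2 * τ) :=
          div_nonneg (sub_nonneg.2 (mul_le_six_mul_mul_add_sq hr.le hs.le h)) (by positivity)
      _ = 96 * x + 3 * D - y := by rw [hx, hy, hD]; field_simp; ring
  have hzs : -(z ^ 2 + s ^ 2) / (4 * τ) = -(y + D / 4) := by rw [hy, hD]; field_simp; ring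
  have hrs : -(x + D / 16) ≤ -((1 / 4 * r) ^ 2 + (1 / 4 * s) ^ 2) / (4 * τ) := by
    have hsq : (r - s) ^ 2 ≤ (2 * (z - s)) ^ 2 := sq_le_sq.2 (by rwa [abs_mul, abs_two])
    rw [← sub_nonneg]
    calc 0 ≤ ((2 * (z - s)) ^ 2 - (r - s) ^ 2) / (64 * τ) :=
          div_nonneg (sub_nonneg.2 hsq) (by positivity)
      _ = -((1 / 4 * r) ^ 2 + (1 / 4 * s) ^ 2) / (4 * τ) - -(x + D / 16) := by
        rw [hx, hD]; field_simp; ring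
  rw [besselHeat_eq hτ hz hs, besselHeat_eq hτ (by positivity) (by positivity), hzs,
    mul_left_comm K]
  gcongr 2 * _ * ?_
  refine (hle x y D (by positivity) (by positivity) (by positivity) hxy hyx).trans ?_
  have := normalizedBesselI_nonneg (ν := ζ - 1 / 2) (by linarith) x
  gcongr

lemma besselHeat_nonneg (hζ : -1 / 2 < ζ) (hτ : 0 < τ) (hr : 0 < r) (hs : 0 < s) :
    0 ≤ besselHeat ζ τ r s := by
  rw [besselHeat_eq hτ hr hs]
  have := normalizedBesselI_nonneg (ν := ζ - 1 / 2) (by linarith) (r * s / (2 * τ))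
  positivity

lemma aestronglyMeasurable_besselHeat (hζ : -1 / 2 < ζ) (hr : 0 < r) (hs : 0 < s) :
    AEStronglyMeasurable (fun τ => besselHeat ζ τ r s) (volume.restrict (Ioi 0)) := by
  have hanti : AntitoneOn (fun τ => normalizedBesselI (ζ - 1 / 2) (r * s / (2 * τ))) (Ioi 0) := by
    intro τ (hτ : 0 < τ) τ' (hτ' : 0 < τ') hle
    exact monotoneOn_normalizedBesselI (by linarith) (mem_Ici.2 (by positivity))
      (mem_Ici.2 (by positivity)) (by gcongr)
  have hmeas := aemeasurable_restrict_of_antitoneOn (μ := volume) measurableSet_Ioi hanti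
  have hfactor : Measurable fun τ : ℝ => 2 * (4 * τ) ^ (-(ζ + 1 / 2)) := by fun_prop
  have hexp : Measurable fun τ => exp (-(r ^ 2 + s ^ 2) / (4 * τ)) := by fun_prop
  refine (hfactor.aemeasurable.mul
    (hexp.aemeasurable.mul hmeas)).aestronglyMeasurable.congr ?_
  filter_upwards [ae_restrict_mem measurableSet_Ioi] with τ hτ
  exact (besselHeat_eq hτ hr hs).symm

lemma besselHeat_le_mul_normalizedBesselI_zero (hζ : -1 / 2 < ζ) (hτ : 0 < τ) (hr : 0 < r)
    (hs : 0 < s) :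
    besselHeat ζ τ r s ≤ 2 * (4 * τ) ^ (-(ζ + 1 / 2)) * ((1 + 1 / (2 * ζ + 1)) *
      (1 + r * s / (2 * τ) / (2 * ζ + 1)) * normalizedBesselI (ζ - 1 / 2) 0) := by
  have ha : 0 < 2 * ζ + 1 := by linarith
  set a := 2 * ζ + 1 with ha_def
  set J := normalizedBesselI (ζ - 1 / 2)
  set y := r * s / (2 * τ) with hy
  have hJ : 0 ≤ J 0 := normalizedBesselI_nonneg (by linarith) 0
  have hJy : J y ≤ (1 + 1 / a) * ((a + y) / a) * exp y * J 0 := by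
    have := normalizedBesselI_le_mul_exp (ν := ζ - 1 / 2) (y := y) (by linarith) le_rfl
      (by positivity)
    rwa [add_zero, sub_zero, show 2 * (ζ - 1 / 2 + 1) = a by rw [ha_def]; ring] at this
  have hexp : exp (-(r ^ 2 + s ^ 2) / (4 * τ)) * exp y ≤ 1 := by
    rw [← exp_add, exp_le_one_iff]
    calc -(r ^ 2 + s ^ 2) / (4 * τ) + y = -((r - s) ^ 2 / (4 * τ)) := by
          rw [hy]; field_simp; ring
      _ ≤ 0 := neg_nonpos.2 (by positivity)
  rw [besselHeat_eq hτ hr hs]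
  gcongr 2 * _ * ?_
  calc exp (-(r ^ 2 + s ^ 2) / (4 * τ)) * J y
      ≤ exp (-(r ^ 2 + s ^ 2) / (4 * τ)) * ((1 + 1 / a) * ((a + y) / a) * exp y * J 0) := by
        gcongr
    _ = exp (-(r ^ 2 + s ^ 2) / (4 * τ)) * exp y * ((1 + 1 / a) * (1 + y / a) * J 0) := by
        field_simp
    _ ≤ (1 + 1 / a) * (1 + y / a) * J 0 := mul_le_of_le_one_left (by positivity) hexp

lemma exists_besselHeat_le_rpow_add_rpow (hζ : -1 / 2 < ζ) (hr : 0 < r) (hs : 0 < s) :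
    ∃ C : ℝ, ∀ τ, 0 < τ →
      besselHeat ζ τ r s ≤ C * (τ ^ (-(ζ + 1 / 2)) + τ ^ (-(ζ + 3 / 2))) := by
  have ha : 0 < 2 * ζ + 1 := by linarith
  have hJ : 0 ≤ normalizedBesselI (ζ - 1 / 2) 0 := normalizedBesselI_nonneg (by linarith) 0
  set B := 2 * 4 ^ (-(ζ + 1 / 2)) *
    ((1 + 1 / (2 * ζ + 1)) * normalizedBesselI (ζ - 1 / 2) 0) with hB
  set b := r * s / 2 / (2 * ζ + 1) with hb
  refine ⟨B * (1 + b), fun τ hτ => ?_⟩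
  calc besselHeat ζ τ r s ≤ _ := besselHeat_le_mul_normalizedBesselI_zero hζ hτ hr hs
    _ = B * (τ ^ (-(ζ + 1 / 2)) + b * τ ^ (-(ζ + 3 / 2))) := by
        rw [mul_rpow (by norm_num) hτ.le, show -(ζ + 3 / 2) = -(ζ + 1 / 2) - 1 by ring,
          rpow_sub_one hτ.ne', hB, hb]
        ring
    _ ≤ B * (1 + b) * (τ ^ (-(ζ + 1 / 2)) + τ ^ (-(ζ + 3 / 2))) := by
        have h₁ : 0 ≤ B * τ ^ (-(ζ + 3 / 2)) := by positivity
        have h₂ : 0 ≤ B * b * τ ^ (-(ζ + 1 / 2)) := by positivity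
        linarith

end BesselHeat

section Subordinator

lemma integrableOn_rpow_neg_mul_of_integrableOn_laplace {f : ℝ → ℝ} {a : ℝ} (ha : 0 < a)
    (hf : Measurable f) (hf₀ : ∀ τ, 0 < τ → 0 ≤ f τ)
    (hint : ∀ l, 0 < l → IntegrableOn (fun τ => exp (-τ * l) * f τ) (Ioi 0))
    (hlap : IntegrableOn (fun l => l ^ (a - 1) * ∫ τ in Ioi 0, exp (-τ * l) * f τ) (Ioi 0)) :
    IntegrableOn (fun τ => τ ^ (-a) * f τ) (Ioi 0) := by
  let G : ℝ × ℝ → ℝ := fun x => x.2 ^ (a - 1) * (exp (-x.1 * x.2) * f x.1)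
  have hG : Measurable G := by fun_prop
  have hnorm : ∀ l ∈ Ioi (0 : ℝ), ∫ τ in Ioi 0, ‖G (τ, l)‖ =
      l ^ (a - 1) * ∫ τ in Ioi 0, exp (-τ * l) * f τ := fun l (hl : 0 < l) => by
    rw [← integral_const_mul]
    refine setIntegral_congr_fun measurableSet_Ioi fun τ hτ => norm_of_nonneg ?_
    have := hf₀ τ hτ
    positivity
  have hGint : Integrable G ((volume.restrict (Ioi 0)).prod (volume.restrict (Ioi 0))) := by
    refine (integrable_prod_iff' hG.aestronglyMeasurable).2
      ⟨?_, hlap.congr_fun (fun l hl => (hnorm l hl).symm) measurableSet_Ioi⟩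
    filter_upwards [ae_restrict_mem measurableSet_Ioi] with l hl
    exact (hint l hl).const_mul (l ^ (a - 1))
  have hgamma : ∀ τ ∈ Ioi (0 : ℝ), (Gamma a)⁻¹ * ∫ l in Ioi 0, G (τ, l) = τ ^ (-a) * f τ :=
    fun τ (hτ : 0 < τ) => by
      have := Gamma_pos_of_pos ha
      simp only [G, ← mul_assoc, integral_mul_const, neg_mul]
      rw [integral_rpow_mul_exp_neg_mul_Ioi ha hτ, one_div, inv_rpow hτ.le, rpow_neg hτ.le]
      field_simp
  exact IntegrableOn.congr_fun (hGint.integral_prod_left.const_mul _) hgamma measurableSet_Ioi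

variable {α t a : ℝ} {σ : ℝ → ℝ → ℝ}

lemma IsStableSubordinatorDensity.integrableOn_rpow_neg_mul
    (hσ : IsStableSubordinatorDensity α σ) (hα : 0 < α) (ht : 0 < t) (ha : 0 < a) :
    IntegrableOn (fun τ => τ ^ (-a) * σ t τ) (Ioi 0) := by
  refine integrableOn_rpow_neg_mul_of_integrableOn_laplace ha (hσ.2.1 t ht) (hσ.1 t ht)
    (fun l hl => .of_integral_ne_zero ?_) ?_
  · rw [hσ.2.2 t l ht hl.le]
    exact (exp_pos _).ne'
  · have hexp : IntegrableOn (fun l => l ^ (a - 1) * exp (-t * l ^ (α / 2))) (Ioi 0) :=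
      integrableOn_rpow_mul_exp_neg_mul_rpow (by linarith) (half_pos hα) ht
    refine hexp.congr_fun (fun l (hl : 0 < l) => ?_) measurableSet_Ioi
    simp only [hσ.2.2 t l ht hl.le]

lemma IsStableSubordinatorDensity.integrableOn_besselHeat_mul
    (hσ : IsStableSubordinatorDensity α σ) (hα : 0 < α) (ht : 0 < t) {ζ r s : ℝ}
    (hζ : -1 / 2 < ζ) (hr : 0 < r) (hs : 0 < s) :
    IntegrableOn (fun τ => besselHeat ζ τ r s * σ t τ) (Ioi 0) := by
  obtain ⟨C, hC⟩ := exists_besselHeat_le_rpow_add_rpow hζ hr hs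
  have hmoments := ((hσ.integrableOn_rpow_neg_mul hα ht (a := ζ + 1 / 2) (by linarith)).add
    (hσ.integrableOn_rpow_neg_mul hα ht (a := ζ + 3 / 2) (by linarith))).const_mul C
  refine hmoments.mono' ((aestronglyMeasurable_besselHeat hζ hr hs).mul
    (hσ.2.1 t ht).aestronglyMeasurable) ?_
  filter_upwards [ae_restrict_mem measurableSet_Ioi] with τ hτ
  have hσ₀ := hσ.1 t ht τ hτ
  rw [norm_of_nonneg (mul_nonneg (besselHeat_nonneg hζ hτ hr hs) hσ₀)]
  calc besselHeat ζ τ r s * σ t τ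
      ≤ C * (τ ^ (-(ζ + 1 / 2)) + τ ^ (-(ζ + 3 / 2))) * σ t τ := by gcongr; exact hC τ hτ
    _ = _ := by simp only [Pi.add_apply]; ring

end Subordinator

theorem stmt19 (ζ α : ℝ) (hζ : -1/2 < ζ) (hα0 : 0 < α) (hα2 : α ≤ 2)
    (p : ℝ → ℝ → ℝ → ℝ) (hp : IsSubordinatedBesselKernel ζ α p) :
    ∃ c K : ℝ, 0 < c ∧ 0 < K ∧
      ∀ r s z t : ℝ, 0 < r → 0 < s → 0 < z → 0 < t → |z - s| > |r - s| / 2 →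
        p t z s ≤ K * p t (c * r) (c * s) := by
  obtain ⟨K, hK, hle⟩ := exists_besselHeat_le hζ
  refine ⟨1 / 4, K, by norm_num, hK, fun r s z t hr hs hz ht h => ?_⟩
  have hheat : ∀ τ, 0 < τ → besselHeat ζ τ z s ≤ K * besselHeat ζ τ (1 / 4 * r) (1 / 4 * s) :=
    fun τ hτ => hle τ r s z hτ hr hs hz (by linarith)
  rcases hp with ⟨-, hp⟩ | ⟨-, σ, hσ, hp⟩
  · rw [hp, hp]
    exact hheat t ht
  · rw [hp, hp, subKernel, subKernel, ← integral_const_mul]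
    refine setIntegral_mono_on (hσ.integrableOn_besselHeat_mul hα0 ht hζ hz hs)
      ((hσ.integrableOn_besselHeat_mul hα0 ht hζ (by positivity) (by positivity)).const_mul K)
      measurableSet_Ioi fun τ hτ => ?_
    rw [← mul_assoc]
    exact mul_le_mul_of_nonneg_right (hheat τ hτ) (hσ.1 t ht τ hτ)
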